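/- Let p be a prime with p ≡ 3 (mod 4) and q = p^m with m an even positive integer. Then the following four identities hold: (1) (n_{1,1}+n_{−1,1}) + (n_{1,3}+n_{−1,3}) + n_{1,0} + n_{−1,0} + n_{1,2} + n_{−1,2} + n_{1,4} + n_{−1,4} = p^{3m} − 1; (2) n_{1,0} − n_{−1,0} + p(n_{1,2} − n_{−1,2}) + p²(n_{1,4} − n_{−1,4}) = p^{m/2}(p^{2m} − 1); (3) −p(n_{1,1}+n_{−1,1}) − p³(n_{1,3}+n_{−1,3}) + n_{1,0} + n_{−1,0} + p²(n_{1,2}+n_{−1,2}) + p⁴(n_{1,4}+n_{−1,4}) = p^m(p^m − 1); (4) n_{1,0} − n_{−1,0} + p³(n_{1,2} − n_{−1,2}) + p⁶(n_{1,4} − n_{−1,4}) = (p+1)·p^{3m/2}·(p^m − 1). -/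

import Mathlib

open Complex Finset

noncomputable def zetaPow (p : ℕ) (a : ZMod p) : ℂ :=
  Complex.exp (2 * Real.pi * Complex.I * (a.val : ℂ) / (p : ℂ))

noncomputable def expSum (p m : ℕ) [Fact p.Prime]
    (α β γ : GaloisField p m) : ℂ :=
  letI : Fintype (GaloisField p m) := Fintype.ofFinite _
  ∑ x : GaloisField p m,
    zetaPow p ((Algebra.trace (ZMod p) (GaloisField p m))
      (α * x ^ 2 + β * x ^ (p + 1) + γ * x ^ (p ^ 2 + 1)))

noncomputable def nval (p m : ℕ) (ε : ℤ) (j : ℕ) : ℂ :=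
  if j % 2 = 0 then (ε : ℂ) * ((Real.sqrt ((p : ℝ) ^ (m + j)) : ℝ) : ℂ)
  else (ε : ℂ) * Complex.I * ((Real.sqrt ((p : ℝ) ^ (m + j)) : ℝ) : ℂ)

noncomputable def nn (p m : ℕ) [Fact p.Prime] (ε : ℤ) (j : ℕ) : ℕ :=
  {t : GaloisField p m × GaloisField p m × GaloisField p m |
    t ≠ (0, 0, 0) ∧ expSum p m t.1 t.2.1 t.2.2 = nval p m ε j}.ncard

/-!
Write `F = 𝔽_q`. By orthogonality of additive characters, the `k`-th moment of the sums
`S(α, β, γ)` over all of `F ^ 3` is `q ^ 3` times the number of solutions in `F ^ k` of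
`∑ v i ^ 2 = ∑ v i ^ (p + 1) = ∑ v i ^ (p ^ 2 + 1) = 0`.

Each `S` is the Gauss sum of a quadratic form over `𝔽_p`, whose square is `(-p) ^ (m + r)` with `r`
the dimension of the radical of the form. For `(α, β, γ) ≠ 0` the radical consists of roots of a
nonzero polynomial of degree at most `p ^ 4`, so `r ≤ 4` and `S` is one of the ten values
`nval p m (±1) j`. Hence the moments are linear combinations of the numbers `nn p m (±1) j`; in the
odd moments the purely imaginary values drop out upon taking real parts.

As `p ≡ 3 (mod 4)`, the number `p + 1` is a multiple of `4`, which leaves only the zero solution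
for `k ≤ 2`. For `k = 3`, the first equation and its Frobenius conjugate say that `v` and `v ^ p`
are isotropic, and the second one that they are orthogonal; this forces `v` to be proportional to a
point of the conic `x ^ 2 + y ^ 2 = -1` over `𝔽_p`, which has `p + 1` points.
-/

section QuadraticCharacter

variable {K : Type*} [Field K] [Fintype K] [DecidableEq K]

lemma card_sq_eq (hK : ringChar K ≠ 2) (c : K) :
    (#{x : K | x ^ 2 = c} : ℤ) = quadraticChar K c + 1 := by
  rw [← quadraticChar_card_sqrts hK]
  congr 2
  ext; simp

lemma sum_comp_sq {M : Type*} [AddCommGroup M] (hK : ringChar K ≠ 2) (f : K → M) :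
    ∑ x, f (x ^ 2) = ∑ y, (quadraticChar K y + 1) • f y := by
  rw [← Finset.sum_fiberwise univ (fun x : K => x ^ 2)]
  refine sum_congr rfl fun y _ => ?_
  rw [← card_sq_eq hK, natCast_zsmul]
  exact sum_eq_card_nsmul fun x hx => by rw [(mem_filter.mp hx).2]

lemma card_sq_add_sq_eq (hK : ringChar K ≠ 2) {c : K} (hc : c ≠ 0) :
    (#{t : K × K | t.1 ^ 2 + t.2 ^ 2 = c} : ℤ) = Fintype.card K - quadraticChar K (-1) := by
  set χ := quadraticChar K
  have hχ : ∑ u, χ u = 0 := quadraticChar_sum_zero hK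
  have hJ : ∑ v, χ v * χ (1 - v) = -χ (-1) := by
    have := jacobiSum_nontrivial_inv (quadraticChar_ne_one hK)
    rwa [(quadraticChar_isQuadratic K).inv] at this
  calc (#{t : K × K | t.1 ^ 2 + t.2 ^ 2 = c} : ℤ)
      = ∑ x : K, (#{y : K | y ^ 2 = c - x ^ 2} : ℤ) := by
        simp_rw [card_filter, Fintype.sum_prod_type, Nat.cast_sum, eq_sub_iff_add_eq']
    _ = ∑ u, (χ u + 1) * (χ (c - u) + 1) := by
        simp_rw [card_sq_eq hK]
        exact sum_comp_sq hK fun u => χ (c - u) + 1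
    _ = ∑ v, (χ (c * v) + 1) * (χ (c - c * v) + 1) :=
        (Equiv.sum_comp (Equiv.mulLeft₀ c hc) fun u => (χ u + 1) * (χ (c - u) + 1)).symm
    _ = ∑ v, (χ c ^ 2 * (χ v * χ (1 - v)) + χ c * χ v + χ c * χ (1 - v) + 1) :=
        sum_congr rfl fun v _ => by
          rw [← mul_one_sub, map_mul, map_mul]
          ring
    _ = Fintype.card K - χ (-1) := by
        have hχ' : ∑ v, χ (1 - v) = 0 := by rw [← hχ]; exact Equiv.sum_comp (Equiv.subLeft 1) χ
        simp only [sum_add_distrib, ← mul_sum, hJ, hχ, hχ', χ, quadraticChar_sq_one hc]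
        simp [sub_eq_neg_add]

variable {R : Type*} [CommRing R] [IsDomain R] {ψ : AddChar K R}

lemma sum_addChar_sq (hK : ringChar K ≠ 2) (hψ : ψ ≠ 1) :
    ∑ x, ψ (x ^ 2) = gaussSum ((quadraticChar K).ringHomComp (Int.castRingHom R)) ψ := by
  rw [sum_comp_sq hK]
  simp [add_mul, sum_add_distrib, AddChar.sum_eq_zero_of_ne_one hψ, gaussSum]

lemma sq_sum_addChar_mul_sq [CharZero R] (hK : ringChar K ≠ 2) (hψ : ψ.IsPrimitive) {w : K}
    (hw : w ≠ 0) :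
    (∑ x, ψ (w * x ^ 2)) ^ 2 = quadraticChar K (-1) * Fintype.card K := by
  have hψw : ψ.mulShift w ≠ 1 := hψ hw
  have hχ := (MulChar.ringHomComp_ne_one_iff (RingHom.injective_int (Int.castRingHom R))).mpr
    (quadraticChar_ne_one hK)
  simp_rw [← AddChar.mulShift_apply]
  rw [sum_addChar_sq hK hψw,
    gaussSum_sq hχ ((quadraticChar_isQuadratic K).comp _) (.of_ne_one hψw)]
  simp

end QuadraticCharacter

section AddChar

variable {R : Type*} [CommRing R]

lemma addChar_map_sum {A ι : Type*} [AddCommGroup A] (ψ : AddChar A R) (s : Finset ι)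
    (f : ι → A) : ψ (∑ i ∈ s, f i) = ∏ i ∈ s, ψ (f i) :=
  map_prod ψ.toMonoidHom (fun i => Multiplicative.ofAdd (f i)) s

variable [IsDomain R]

lemma sum_addChar_dotProduct {A ι : Type*} [CommRing A] [Fintype A] [DecidableEq A]
    [Fintype ι] [DecidableEq ι] {ψ : AddChar A R} (hψ : ψ.IsPrimitive)
    (w : ι → A) :
    ∑ a : ι → A, ψ (a ⬝ᵥ w) = if w = 0 then (Fintype.card A : R) ^ Fintype.card ι else 0 := by
  calc ∑ a : ι → A, ψ (a ⬝ᵥ w) = ∏ i, ∑ b, ψ (b * w i) := by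
        simp_rw [prod_univ_sum, Fintype.piFinset_univ, dotProduct, addChar_map_sum]
    _ = ∏ i, if w i = 0 then (Fintype.card A : R) else 0 := by
        simp_rw [AddChar.sum_mulShift _ hψ, Nat.cast_ite, Nat.cast_zero]
    _ = if w = 0 then (Fintype.card A : R) ^ Fintype.card ι else 0 := by
        simp [Fintype.prod_ite_zero, funext_iff]

lemma sum_pow_sum_addChar_dotProduct {A ι X : Type*} [CommRing A] [Fintype A] [DecidableEq A]
    [Fintype ι] [DecidableEq ι] [Fintype X] {ψ : AddChar A R} (hψ : ψ.IsPrimitive)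
    (f : X → ι → A) (k : ℕ) :
    ∑ a : ι → A, (∑ x, ψ (a ⬝ᵥ f x)) ^ k =
      (Fintype.card A : R) ^ Fintype.card ι * #{v : Fin k → X | ∑ i, f (v i) = 0} := by
  calc ∑ a : ι → A, (∑ x, ψ (a ⬝ᵥ f x)) ^ k
      = ∑ a : ι → A, ∑ v : Fin k → X, ψ (a ⬝ᵥ ∑ i, f (v i)) := by
        simp_rw [Fintype.sum_pow, dotProduct_sum, addChar_map_sum]
    _ = _ := by
        rw [sum_comm]
        simp_rw [sum_addChar_dotProduct hψ, ← sum_filter, sum_const, nsmul_eq_mul, mul_comm]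

variable {K : Type*} [Field K] [Fintype K] [DecidableEq K] [CharZero R]

/-- Diagonalize the form: the sum factors into `dim Q.radical` trivial sums, with square `q ^ 2`,
and quadratic Gauss sums, with square `χ (-1) * q`. As `χ (-1) ^ 2 = 1`, both contributions
combine to a single power. -/
lemma sq_sum_addChar_quadraticForm (hK : ringChar K ≠ 2) {ψ : AddChar K R}
    (hψ : ψ.IsPrimitive) {V : Type*} [AddCommGroup V] [Module K V] [Fintype V]
    (Q : QuadraticForm K V) :
    (∑ v, ψ (Q v)) ^ 2 = (quadraticChar K (-1) * Fintype.card K : R) ^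
      (Module.finrank K V + Module.finrank K Q.radical) := by
  have : NeZero (2 : K) := ⟨Ring.two_ne_zero hK⟩
  have : Invertible (2 : K) := invertibleOfNonzero two_ne_zero
  obtain ⟨w, hw⟩ := Q.equivalent_weightedSumSquares
  set g : R := quadraticChar K (-1) * Fintype.card K
  have hg : (Fintype.card K : R) ^ 2 = g ^ 2 := by
    have : (quadraticChar K (-1) : R) ^ 2 = 1 := by
      have h := quadraticChar_sq_one (F := K) (neg_ne_zero.mpr one_ne_zero)
      exact_mod_cast h
    rw [mul_pow, this, one_mul]
  have hfactor (i) : (∑ b, ψ (w i * b ^ 2)) ^ 2 = g * if w i = 0 then g else 1 := by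
    split_ifs with hi
    · simpa [hi, ← sq] using hg
    · rw [sq_sum_addChar_mul_sq hK hψ hi, mul_one]
  have hprod : ∑ v, ψ (Q v) = ∏ i, ∑ b, ψ (w i * b ^ 2) := by
    obtain ⟨e⟩ := hw
    rw [prod_univ_sum, Fintype.piFinset_univ]
    refine Fintype.sum_equiv e.toEquiv _ _ fun v => ?_
    rw [← addChar_map_sum, ← e.map_app v, QuadraticMap.weightedSumSquares_apply]
    simp_rw [smul_eq_mul, ← sq]
    rfl
  have hrad : #{i | w i = 0} = Module.finrank K Q.radical := by
    rw [QuadraticForm.finrank_radical_of_equiv_weightedSumSquares hw, ← Set.ncard_coe_finset]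
    simp
  rw [hprod, ← prod_pow, prod_congr rfl fun i _ => hfactor i, prod_mul_distrib, prod_const,
    card_univ, Fintype.card_fin, ← prod_filter, prod_const, hrad, pow_add]

end AddChar

section FrobMonomials

variable {F : Type*} [Semiring F]

/-- The point `(x ^ 2, x ^ (q + 1), …, x ^ (q ^ d + 1))`; a linear combination `a ⬝ᵥ _` of its
coordinates is the argument of the trace in the exponential sums. -/
def frobMonomials (q d : ℕ) (x : F) : Fin (d + 1) → F :=
  fun j => x ^ (q ^ (j : ℕ) + 1)

/-- The solutions in `F ^ k` of the diagonal system `∑ i, v i ^ (q ^ j + 1) = 0`, `0 ≤ j ≤ d`. -/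
def frobZeros (F : Type*) [Semiring F] (q d k : ℕ) : Set (Fin k → F) :=
  {v | ∑ i, frobMonomials q d (v i) = 0}

end FrobMonomials

section RadicalPoly

open Polynomial

variable {F : Type*} [CommSemiring F] {q d : ℕ}

/-- A polynomial whose roots contain the radical of the quadratic form
`x ↦ Tr (a ⬝ᵥ frobMonomials q d x)`. -/
noncomputable def radicalPoly (q : ℕ) (a : Fin (d + 1) → F) : F[X] :=
  ∑ j, (C (a j ^ q ^ d) * X ^ q ^ (d + j) + C (a j ^ q ^ (d - j)) * X ^ q ^ (d - j))

lemma natDegree_radicalPoly_le (hq : 0 < q) (a : Fin (d + 1) → F) :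
    (radicalPoly q a).natDegree ≤ q ^ (2 * d) := by
  have hpow {k : ℕ} (hk : k ≤ 2 * d) (c : F) : (C c * X ^ q ^ k).natDegree ≤ q ^ (2 * d) :=
    (natDegree_C_mul_X_pow_le _ _).trans (Nat.pow_le_pow_right hq hk)
  exact natDegree_sum_le_of_forall_le _ _ fun j _ =>
    natDegree_add_le_of_degree_le (hpow (by lia) _) (hpow (by lia) _)

lemma coeff_radicalPoly (hq : 1 < q) (a : Fin (d + 1) → F) (i : Fin (d + 1)) :
    (radicalPoly q a).coeff (q ^ (d + i)) = (if i = 0 then 2 else 1) * a i ^ q ^ d := by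
  have hinj (k l : ℕ) : q ^ k = q ^ l ↔ k = l := Nat.pow_right_inj hq
  have hlow (j : Fin (d + 1)) : d + (i : ℕ) = d - j ↔ i = 0 ∧ j = 0 := by
    simp only [Fin.ext_iff, Fin.val_zero]
    lia
  have hhigh (j : Fin (d + 1)) : d + (i : ℕ) = d + j ↔ i = j := by rw [add_right_inj, Fin.ext_iff]
  simp only [radicalPoly, finsetSum_coeff, coeff_add, coeff_C_mul, coeff_X_pow, hinj, hlow, hhigh,
    mul_ite, mul_one, mul_zero, sum_add_distrib, ite_and, sum_ite_eq, mem_univ, if_true]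
  split_ifs with hi
  · simp [hi, two_mul]
  · simp

lemma radicalPoly_ne_zero [NoZeroDivisors F] [Nontrivial F] (hq : 1 < q) (hF : ringChar F ≠ 2)
    {a : Fin (d + 1) → F} (ha : a ≠ 0) : radicalPoly q a ≠ 0 := by
  obtain ⟨i, hi⟩ := Function.ne_iff.mp ha
  intro h
  have hcoeff := coeff_radicalPoly hq a i
  rw [h, coeff_zero, eq_comm, mul_eq_zero] at hcoeff
  refine hcoeff.elim (fun h => ?_) (pow_ne_zero _ hi)
  split_ifs at h
  exacts [Ring.two_ne_zero hF h, one_ne_zero h]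

end RadicalPoly

lemma trace_algEquiv_mul {A B : Type*} [CommRing A] [CommRing B] [Algebra A B] (τ : B ≃ₐ[A] B)
    (x y : B) : Algebra.trace A B (τ x * y) = Algebra.trace A B (x * τ⁻¹ y) := by
  rw [← Algebra.trace_eq_of_algEquiv τ (x * τ⁻¹ y), map_mul τ, ← AlgEquiv.mul_apply,
    mul_inv_cancel, AlgEquiv.one_apply]

lemma traceChar_isPrimitive {K F R : Type*} [Field K] [Field F] [Algebra K F]
    [FiniteDimensional K F] [Algebra.IsSeparable K F] [CommMonoid R] {ψ : AddChar K R}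
    (hψ : ψ ≠ 1) : (ψ.compAddMonoidHom (Algebra.trace K F).toAddMonoidHom).IsPrimitive := by
  refine .of_ne_one fun h => hψ ?_
  ext b
  obtain ⟨x, rfl⟩ := Algebra.trace_surjective K F b
  simpa using DFunLike.congr_fun h x

section FrobeniusTraceForm

variable (K F : Type*) [Field K] [Fintype K] [Field F] [Finite F] [Algebra K F] {d : ℕ}

/-- The Frobenius automorphism `x ↦ x ^ q` of a finite extension `F` of `K`, where `q = #K`. -/
noncomputable abbrev frob : F ≃ₐ[K] F :=
  FiniteField.frobeniusAlgEquivOfAlgebraic K F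

variable {F}

lemma frob_pow_apply (k : ℕ) (x : F) : (frob K F ^ k) x = x ^ Fintype.card K ^ k := by
  rw [AlgEquiv.coe_pow, FiniteField.coe_frobeniusAlgEquivOfAlgebraic_iterate]

/-- The linear map `x ↦ ∑ j, a j * x ^ q ^ j`, where `q = #K`. -/
noncomputable def linearizedMap (a : Fin (d + 1) → F) : F →ₗ[K] F :=
  ∑ j, LinearMap.mulLeft K (a j) ∘ₗ (frob K F ^ (j : ℕ)).toLinearMap

lemma linearizedMap_apply (a : Fin (d + 1) → F) (x : F) :
    linearizedMap K a x = ∑ j, a j * (frob K F ^ (j : ℕ)) x := by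
  simp [linearizedMap]

/-- The quadratic form `x ↦ Tr (∑ j, a j * x ^ (q ^ j + 1))` over `K`, where `q = #K`. -/
noncomputable def frobTraceForm (a : Fin (d + 1) → F) : QuadraticForm K F :=
  LinearMap.BilinMap.toQuadraticMap (Algebra.traceForm K F ∘ₗ linearizedMap K a)

lemma frobTraceForm_apply (a : Fin (d + 1) → F) (x : F) :
    frobTraceForm K a x =
      Algebra.trace K F (a ⬝ᵥ frobMonomials (Fintype.card K) d x) := by
  rw [frobTraceForm, LinearMap.BilinMap.toQuadraticMap_apply, LinearMap.comp_apply,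
    Algebra.traceForm_apply, linearizedMap_apply, sum_mul]
  simp_rw [frob_pow_apply, mul_assoc, ← pow_succ]
  rfl

lemma polar_frobTraceForm (a : Fin (d + 1) → F) (x y : F) :
    QuadraticMap.polar (frobTraceForm K a) x y = Algebra.trace K F
      ((∑ j, (a j * (frob K F ^ (j : ℕ)) x + (frob K F ^ (j : ℕ))⁻¹ (a j * x))) * y) := by
  have hadjoint : Algebra.trace K F (linearizedMap K a y * x) =
      Algebra.trace K F ((∑ j : Fin (d + 1), (frob K F ^ (j : ℕ))⁻¹ (a j * x)) * y) := by
    simp_rw [linearizedMap_apply, sum_mul, map_sum]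
    refine sum_congr rfl fun j _ => ?_
    rw [mul_comm (a j), mul_assoc, trace_algEquiv_mul, mul_comm]
  rw [frobTraceForm, LinearMap.BilinMap.polar_toQuadraticMap]
  simp only [LinearMap.comp_apply, Algebra.traceForm_apply]
  rw [hadjoint, linearizedMap_apply, ← map_add, ← add_mul, sum_add_distrib]

lemma eval_radicalPoly (a : Fin (d + 1) → F) (x : F) :
    (radicalPoly (Fintype.card K) a).eval x = (frob K F ^ d)
      (∑ j, (a j * (frob K F ^ (j : ℕ)) x + (frob K F ^ (j : ℕ))⁻¹ (a j * x))) := by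
  rw [map_sum, radicalPoly, Polynomial.eval_finsetSum]
  refine sum_congr rfl fun j _ => ?_
  rw [map_add, ← AlgEquiv.mul_apply, ← pow_sub _ (Fin.is_le j), map_mul, ← AlgEquiv.mul_apply,
    ← pow_add]
  simp [frob_pow_apply, mul_pow]

lemma isRoot_radicalPoly {a : Fin (d + 1) → F} {x : F} (hx : x ∈ (frobTraceForm K a).radical) :
    (radicalPoly (Fintype.card K) a).IsRoot x := by
  rw [Polynomial.IsRoot.def, eval_radicalPoly, map_eq_zero_iff _ (AlgEquiv.injective _)]
  refine (traceForm_nondegenerate K F).1 _ fun y => ?_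
  rw [Algebra.traceForm_apply, ← polar_frobTraceForm]
  exact LinearMap.congr_fun (QuadraticMap.radical_le_ker_polarBilin hx) y

lemma finrank_radical_frobTraceForm_le (hF : ringChar F ≠ 2) {a : Fin (d + 1) → F} (ha : a ≠ 0) :
    Module.finrank K (frobTraceForm K a).radical ≤ 2 * d := by
  classical
  have := Fintype.ofFinite F
  have hq : 1 < Fintype.card K := Fintype.one_lt_card
  rw [← Nat.pow_le_pow_iff_right hq, ← Module.card_eq_pow_finrank, Fintype.card_subtype]
  refine (Polynomial.card_le_degree_of_subset_roots fun x hx => ?_).trans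
    (natDegree_radicalPoly_le (zero_lt_one.trans hq) a)
  rw [Polynomial.mem_roots (radicalPoly_ne_zero hq hF ha)]
  exact isRoot_radicalPoly K (mem_filter.mp hx).2

end FrobeniusTraceForm

section FrobSum

variable {K F R : Type*} [Field K] [Fintype K] [Field F] [Fintype F] [Algebra K F]
  [CommRing R] {d : ℕ}

/-- The exponential sum `∑ x, ψ (Tr (a 0 * x ^ 2 + a 1 * x ^ (q + 1) + ⋯ + a d * x ^ (q ^ d + 1)))`
over `F`, where `ψ` is an additive character of `K` and `q = #K`. -/
noncomputable def frobSum (ψ : AddChar K R) (a : Fin (d + 1) → F) : R :=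
  ∑ x, ψ (Algebra.trace K F (a ⬝ᵥ frobMonomials (Fintype.card K) d x))

variable [IsDomain R] {ψ : AddChar K R}

lemma exists_sq_frobSum_eq [DecidableEq K] [CharZero R] (hK : ringChar K ≠ 2)
    (hψ : ψ.IsPrimitive) {a : Fin (d + 1) → F} (ha : a ≠ 0) :
    ∃ r ≤ 2 * d, frobSum ψ a ^ 2 =
      (quadraticChar K (-1) * Fintype.card K : R) ^ (Module.finrank K F + r) := by
  have hF : ringChar F ≠ 2 := Algebra.ringChar_eq K F ▸ hK
  refine ⟨_, finrank_radical_frobTraceForm_le K hF ha, ?_⟩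
  simp_rw [frobSum, ← frobTraceForm_apply]
  exact sq_sum_addChar_quadraticForm hK hψ (frobTraceForm K a)

lemma sum_frobSum_pow (hψ : ψ ≠ 1) (d k : ℕ) :
    ∑ a : Fin (d + 1) → F, frobSum ψ a ^ k =
      (Nat.card F : R) ^ (d + 1) * (frobZeros F (Fintype.card K) d k).ncard := by
  classical
  have h := sum_pow_sum_addChar_dotProduct (traceChar_isPrimitive (F := F) hψ)
    (frobMonomials (Fintype.card K) d) k
  rw [Fintype.card_fin, ← Nat.card_eq_fintype_card (α := F), ← Set.ncard_coe_finset,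
    coe_filter_univ] at h
  exact h

end FrobSum

section DiagonalZeros

lemma ringChar_ne_two_of_card_mod_four {K : Type*} [Field K] [Fintype K]
    (hK : Fintype.card K % 4 = 3) : ringChar K ≠ 2 := fun h => by
  have := FiniteField.even_card_of_char_two h
  lia

section Rationality

lemma eq_zero_of_sq_add_sq_eq_zero {R : Type*} [CommRing R] [IsDomain R] (h2 : (2 : R) ≠ 0)
    {n : ℕ} (hn : 4 ∣ n) {x y : R} (h : x ^ 2 + y ^ 2 = 0) (hxy : x ^ n + y ^ n = 0) :
    x = 0 ∧ y = 0 := by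
  obtain ⟨k, rfl⟩ := hn
  have hpow : x ^ (4 * k) = y ^ (4 * k) := by
    have h4 : x ^ 4 = y ^ 4 := by linear_combination (x ^ 2 - y ^ 2) * h
    rw [pow_mul, pow_mul, h4]
  have hy : y = 0 := by
    rw [hpow, ← two_mul] at hxy
    exact eq_zero_of_pow_eq_zero ((mul_eq_zero.mp hxy).resolve_left h2)
  exact ⟨by simpa [hy] using h, hy⟩

/-- By Lagrange's identity, `a * b' - b * a'` squares to zero, so that the isotropic vectors
`(a, b, 1)` and `(a', b', 1)` are proportional. -/
lemma eq_of_isotropic_of_orthogonal {R : Type*} [CommRing R] [IsReduced R] {a b a' b' : R}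
    (h : a ^ 2 + b ^ 2 + 1 = 0) (h' : a' ^ 2 + b' ^ 2 + 1 = 0) (horth : a' * a + b' * b + 1 = 0) :
    a' = a ∧ b' = b := by
  have hdet : a * b' - b * a' = 0 := by
    apply eq_zero_of_pow_eq_zero (n := 2)
    linear_combination (a' ^ 2 + b' ^ 2) * h - h' - (a' * a + b' * b - 1) * horth
  constructor
  · linear_combination a' * h - a * horth + b * hdet
  · linear_combination b' * h - b * horth - a * hdet

open Polynomial in
lemma exists_algebraMap_eq_of_pow_card_eq (K : Type*) {F : Type*} [Field K] [Fintype K]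
    [CommRing F] [IsDomain F] [Algebra K F] {x : F} (hx : x ^ Fintype.card K = x) :
    ∃ c : K, algebraMap K F c = x := by
  have hprod : ∏ c : K, (X - C c) = X ^ Fintype.card K - X := by
    have hroots : (X ^ Fintype.card K - X : K[X]).roots = univ.val :=
      FiniteField.roots_X_pow_card_sub_X K
    have h := prod_multiset_X_sub_C_of_monic_of_roots_card_eq
      (monic_X_pow_sub (degree_X_le.trans_lt (Nat.one_lt_cast.mpr Fintype.one_lt_card))) (by
        rw [hroots, FiniteField.X_pow_card_sub_X_natDegree_eq K Fintype.one_lt_card]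
        exact card_univ)
    rwa [hroots] at h
  have h := congrArg (aeval x) hprod
  rw [map_prod, map_sub, map_pow, aeval_X, hx, sub_self, prod_eq_zero_iff] at h
  obtain ⟨c, -, hc⟩ := h
  exact ⟨c, (sub_eq_zero.mp (by simpa using hc)).symm⟩

lemma pow_card_eq_self_of_isotropic {K F : Type*} [Field K] [Fintype K] [CommRing F] [IsReduced F]
    [Algebra K F] {a b : F} (h : a ^ 2 + b ^ 2 + 1 = 0)
    (h' : a ^ (Fintype.card K + 1) + b ^ (Fintype.card K + 1) + 1 = 0) :
    a ^ Fintype.card K = a ∧ b ^ Fintype.card K = b := by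
  refine eq_of_isotropic_of_orthogonal h ?_ (by rwa [← pow_succ, ← pow_succ])
  have hfrob := congrArg (FiniteField.frobeniusAlgHom K F) h
  simpa only [map_add, map_pow, map_one, map_zero, FiniteField.frobeniusAlgHom_apply] using hfrob

end Rationality

section SmallArity

variable {F : Type*} [CommRing F] {q d k : ℕ}

lemma sum_sq_eq_zero {v : Fin k → F} (hv : v ∈ frobZeros F q d k) : ∑ i, v i ^ 2 = 0 := by
  simpa [frobMonomials] using congrFun hv 0

lemma sum_pow_add_one_eq_zero (hd : 0 < d) {v : Fin k → F} (hv : v ∈ frobZeros F q d k) :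
    ∑ i, v i ^ (q + 1) = 0 := by
  simpa [frobMonomials] using congrFun hv ⟨1, by lia⟩

lemma zero_mem_frobZeros : 0 ∈ frobZeros F q d k := by
  simp [frobZeros, frobMonomials, funext_iff]

lemma frobZeros_zero : frobZeros F q d 0 = {0} :=
  Set.eq_singleton_iff_unique_mem.mpr ⟨zero_mem_frobZeros, fun _ _ => Subsingleton.elim _ _⟩

variable [IsDomain F]

lemma frobZeros_one : frobZeros F q d 1 = {0} := by
  refine Set.eq_singleton_iff_unique_mem.mpr ⟨zero_mem_frobZeros, fun v hv => ?_⟩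
  have h := sum_sq_eq_zero hv
  rw [Fin.sum_univ_one] at h
  ext i
  simpa [Subsingleton.elim i 0] using h

lemma frobZeros_two (hq : 4 ∣ q + 1) (hd : 0 < d) (h2 : (2 : F) ≠ 0) :
    frobZeros F q d 2 = {0} := by
  refine Set.eq_singleton_iff_unique_mem.mpr ⟨zero_mem_frobZeros, fun v hv => ?_⟩
  have hsq := sum_sq_eq_zero hv
  have hq1 := sum_pow_add_one_eq_zero hd hv
  rw [Fin.sum_univ_two] at hsq hq1
  obtain ⟨h0, h1⟩ := eq_zero_of_sq_add_sq_eq_zero h2 hq hsq hq1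
  ext i
  fin_cases i
  exacts [h0, h1]

end SmallArity

section ThreeVariables

variable {K F : Type*} [Field K] [Field F] [Algebra K F] {d : ℕ}

/-- The point `(z * a, z * b, z)` of `F ^ 3` on the line through the `K`-rational point
`(a, b, 1)`. -/
def conePoint (s : (K × K) × F) : Fin 3 → F :=
  s.2 • ![algebraMap K F s.1.1, algebraMap K F s.1.2, 1]

lemma conePoint_injOn : Set.InjOn (conePoint (K := K) (F := F)) {s | s.2 ≠ 0} := by
  rintro ⟨⟨a, b⟩, z⟩ (hz : z ≠ 0) ⟨⟨a', b'⟩, z'⟩ - h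
  have h0 := congrFun h 0
  have h1 := congrFun h 1
  have h2 := congrFun h 2
  simp only [conePoint, Pi.smul_apply, smul_eq_mul, Matrix.cons_val, mul_one] at h0 h1 h2
  subst h2
  simpa [hz] using And.intro h0 h1

variable [Fintype K]

lemma conePoint_mem_frobZeros {s : (K × K) × F} (hs : s.1.1 ^ 2 + s.1.2 ^ 2 = -1) :
    conePoint s ∈ frobZeros F (Fintype.card K) d 3 := by
  obtain ⟨⟨a, b⟩, z⟩ := s
  have hab : algebraMap K F a ^ 2 + algebraMap K F b ^ 2 + 1 = 0 := by
    simpa using congrArg (algebraMap K F) (eq_neg_iff_add_eq_zero.mp hs)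
  have hpow (c : K) (j : ℕ) :
      algebraMap K F c ^ (Fintype.card K ^ j + 1) = algebraMap K F c ^ 2 := by
    rw [← map_pow, pow_succ, FiniteField.pow_card_pow, ← sq, map_pow]
  refine funext fun j => ?_
  simp only [conePoint, frobMonomials, Fin.sum_univ_three, Pi.add_apply, Pi.smul_apply,
    smul_eq_mul, Matrix.cons_val, mul_pow, hpow, one_pow, ← mul_add, hab, mul_zero, Pi.zero_apply]

lemma exists_conePoint_eq (hq : 4 ∣ Fintype.card K + 1) (hd : 0 < d) (h2 : (2 : F) ≠ 0)
    {v : Fin 3 → F} (hv : v ∈ frobZeros F (Fintype.card K) d 3) (hv0 : v ≠ 0) :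
    ∃ s : (K × K) × F, s.1.1 ^ 2 + s.1.2 ^ 2 = -1 ∧ s.2 ≠ 0 ∧ conePoint s = v := by
  have hsq := sum_sq_eq_zero hv
  have hq1 := sum_pow_add_one_eq_zero hd hv
  rw [Fin.sum_univ_three] at hsq hq1
  have hz : v 2 ≠ 0 := by
    intro hz
    rw [hz, zero_pow (by simp), add_zero] at hsq hq1
    obtain ⟨h0, h1⟩ := eq_zero_of_sq_add_sq_eq_zero h2 hq hsq hq1
    refine hv0 (funext fun i => ?_)
    fin_cases i
    exacts [h0, h1, hz]
  have hscale {n : ℕ} (h : v 0 ^ n + v 1 ^ n + v 2 ^ n = 0) :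
      (v 0 / v 2) ^ n + (v 1 / v 2) ^ n + 1 = 0 := by
    rw [div_pow, div_pow, ← div_self (pow_ne_zero n hz), ← add_div, ← add_div, h, zero_div]
  obtain ⟨ha, hb⟩ := pow_card_eq_self_of_isotropic (hscale hsq) (hscale hq1)
  obtain ⟨a, ha⟩ := exists_algebraMap_eq_of_pow_card_eq K ha
  obtain ⟨b, hb⟩ := exists_algebraMap_eq_of_pow_card_eq K hb
  refine ⟨((a, b), v 2), ?_, hz, ?_⟩
  · apply (algebraMap K F).injective
    rw [map_add, map_pow, map_pow, ha, hb, map_neg, map_one]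
    exact eq_neg_of_add_eq_zero_left (hscale hsq)
  · ext i
    fin_cases i <;> simp [conePoint, ha, hb, mul_div_cancel₀ _ hz]

lemma frobZeros_three (hq : 4 ∣ Fintype.card K + 1) (hd : 0 < d) (h2 : (2 : F) ≠ 0) :
    frobZeros F (Fintype.card K) d 3 =
      insert 0 (conePoint '' {t : K × K | t.1 ^ 2 + t.2 ^ 2 = -1} ×ˢ {0}ᶜ) := by
  ext v
  constructor
  · intro hv
    refine or_iff_not_imp_left.mpr fun hv0 => ?_
    obtain ⟨s, hs, hs0, rfl⟩ := exists_conePoint_eq hq hd h2 hv hv0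
    exact ⟨s, ⟨hs, hs0⟩, rfl⟩
  · rintro (rfl | ⟨s, hs, rfl⟩)
    exacts [zero_mem_frobZeros, conePoint_mem_frobZeros hs.1]

variable (K F)

lemma ncard_frobZeros_three [Finite F] (hq : Fintype.card K % 4 = 3) (hd : 0 < d) :
    ((frobZeros F (Fintype.card K) d 3).ncard : ℤ) =
      1 + (Fintype.card K + 1) * (Nat.card F - 1) := by
  classical
  have hK := ringChar_ne_two_of_card_mod_four hq
  have h2 : (2 : F) ≠ 0 := Ring.two_ne_zero (Algebra.ringChar_eq K F ▸ hK)
  have hconic : ({t : K × K | t.1 ^ 2 + t.2 ^ 2 = -1}.ncard : ℤ) = Fintype.card K + 1 := by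
    rw [← coe_filter_univ, Set.ncard_coe_finset,
      card_sq_add_sq_eq hK (neg_ne_zero.mpr one_ne_zero), quadraticChar_neg_one hK,
      ZMod.χ₄_nat_three_mod_four hq, sub_neg_eq_add]
  have h0 : 0 ∉ conePoint '' ({t : K × K | t.1 ^ 2 + t.2 ^ 2 = -1} ×ˢ {(0 : F)}ᶜ) := by
    rintro ⟨s, hs, h⟩
    exact hs.2 (by simpa [conePoint] using congrFun h 2)
  rw [frobZeros_three (by lia) hd h2, Set.ncard_insert_of_notMem h0,
    (conePoint_injOn.mono fun s hs => hs.2).ncard_image, Set.ncard_prod,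
    Set.ncard_compl, Set.ncard_singleton]
  push_cast [hconic, Nat.cast_sub (Nat.card_pos (α := F))]
  ring

end ThreeVariables

end DiagonalZeros

section Values

variable {p m : ℕ}

lemma zetaPow_eq_stdAddChar [NeZero p] (a : ZMod p) : zetaPow p a = ZMod.stdAddChar a := by
  rw [ZMod.stdAddChar_apply, ZMod.toCircle_apply, zetaPow]

lemma nval_neg (ε : ℤ) (j : ℕ) : nval p m (-ε) j = -nval p m ε j := by
  unfold nval
  split_ifs <;> push_cast <;> ring

lemma re_nval (h : ℕ) (ε : ℤ) (j : ℕ) :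
    (nval p (2 * h) ε j).re = if Even j then ε * (p : ℝ) ^ (h + j / 2) else 0 := by
  simp only [nval, ← Nat.even_iff]
  split_ifs with hj
  · obtain ⟨i, rfl⟩ := hj.two_dvd
    have hsqrt : √((p : ℝ) ^ (2 * h + 2 * i)) = p ^ (h + i) := by
      rw [← mul_add, mul_comm, pow_mul, Real.sqrt_sq (by positivity)]
    rw [hsqrt, Nat.mul_div_cancel_left i two_pos, ← ofReal_intCast, ← ofReal_mul, ofReal_re]
  · simp

lemma nval_sq (hm : Even m) {ε : ℤ} (hε : ε ^ 2 = 1) (j : ℕ) :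
    nval p m ε j ^ 2 = ((-p : ℤ) : ℂ) ^ (m + j) := by
  have hε' : (ε : ℂ) ^ 2 = 1 := by exact_mod_cast hε
  have hsqrt : (√((p : ℝ) ^ (m + j)) : ℂ) ^ 2 = (p : ℂ) ^ (m + j) := by
    rw [← ofReal_pow, Real.sq_sqrt (by positivity)]
    simp
  rw [nval]
  split_ifs with hj
  · rw [mul_pow, hε', hsqrt, one_mul, Int.cast_neg, (hm.add (Nat.even_iff.mpr hj)).neg_pow,
      Int.cast_natCast]
  · rw [mul_pow, mul_pow, hε', hsqrt, I_sq, Int.cast_neg,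
      (hm.add_odd (Nat.odd_iff.mpr (by lia))).neg_pow, Int.cast_natCast]
    ring

lemma re_nval_pow (h : ℕ) {ε : ℤ} (hε : ε ^ 2 = 1) (j l : ℕ) :
    (nval p (2 * h) ε j ^ (2 * l + 1)).re =
      if Even j then ε * ((p : ℝ) ^ (h + j / 2)) ^ (2 * l + 1) else 0 := by
  have hpow : nval p (2 * h) ε j ^ (2 * l + 1) =
      ((((-p) ^ (2 * h + j)) ^ l : ℝ) : ℂ) * nval p (2 * h) ε j := by
    rw [pow_succ, pow_mul, nval_sq (even_two_mul h) hε]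
    push_cast
    rfl
  rw [hpow, re_ofReal_mul, re_nval]
  split_ifs with hj
  · obtain ⟨i, rfl⟩ := hj.two_dvd
    rw [← mul_add, (even_two_mul _).neg_pow, Nat.mul_div_cancel_left i two_pos]
    ring
  · exact mul_zero _

lemma nval_injOn (hp : 1 < p) (hm : Even m) :
    Set.InjOn (fun s : ℤ × ℕ => nval p m s.1 s.2) {s | s.1 = 1 ∨ s.1 = -1} := by
  rintro ⟨ε, j⟩ (hε : ε = 1 ∨ ε = -1) ⟨ε', j'⟩ (hε' : ε' = 1 ∨ ε' = -1)
    (h : nval p m ε j = nval p m ε' j')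
  have hsq : ((-p : ℤ) : ℂ) ^ (m + j) = ((-p : ℤ) : ℂ) ^ (m + j') := by
    rw [← nval_sq hm (sq_eq_one_iff.mpr hε), h, nval_sq hm (sq_eq_one_iff.mpr hε')]
  obtain rfl : j = j' := by
    have hinj := Int.pow_right_injective (a := -p) (by simpa using hp)
    exact Nat.add_left_cancel (hinj (by exact_mod_cast hsq))
  have hne : nval p m 1 j ≠ 0 := by
    rw [← pow_ne_zero_iff two_ne_zero, nval_sq hm (one_pow 2)]
    exact pow_ne_zero _ (by simp; lia)
  rcases hε with rfl | rfl <;> rcases hε' with rfl | rfl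
  · rfl
  · exact absurd (self_eq_neg.mp (h.trans (nval_neg 1 j))) hne
  · exact absurd (neg_eq_self.mp ((nval_neg 1 j).symm.trans h)) hne
  · rfl

end Values

section Moments

variable {p m : ℕ} [Fact p.Prime]

lemma expSum_eq_frobSum [Fintype (GaloisField p m)] (α β γ : GaloisField p m) :
    expSum p m α β γ = frobSum (K := ZMod p) ZMod.stdAddChar ![α, β, γ] := by
  unfold expSum frobSum
  simp only [zetaPow_eq_stdAddChar, dotProduct, frobMonomials, ZMod.card]
  congr!
  rw [Fin.sum_univ_three]
  simp

lemma nn_eq_ncard [Fintype (GaloisField p m)] (ε : ℤ) (j : ℕ) :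
    nn p m ε j = {a : Fin 3 → GaloisField p m |
      a ≠ 0 ∧ frobSum (K := ZMod p) ZMod.stdAddChar a = nval p m ε j}.ncard := by
  have hzero (t : GaloisField p m × GaloisField p m × GaloisField p m) :
      ![t.1, t.2.1, t.2.2] = 0 ↔ t = (0, 0, 0) := by
    simp [Prod.ext_iff]
  refine Set.ncard_congr (fun t _ => ![t.1, t.2.1, t.2.2]) (fun t ht => ?_) (fun s t _ _ h => ?_)
    fun a ha => ?_
  · rwa [Set.mem_ofPred, ne_eq, hzero, ← expSum_eq_frobSum]
  · simpa [Prod.ext_iff] using h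
  · have ha' : ![a 0, a 1, a 2] = a := by
      ext i
      fin_cases i <;> rfl
    refine ⟨(a 0, a 1, a 2), ?_, ha'⟩
    rwa [Set.mem_ofPred, expSum_eq_frobSum, ne_eq, ← hzero, ha']

lemma exists_frobSum_eq_nval (hp4 : p % 4 = 3) (hm : 0 < m) (hme : Even m)
    [Fintype (GaloisField p m)] {a : Fin 3 → GaloisField p m} (ha : a ≠ 0) :
    ∃ s ∈ ({1, -1} : Finset ℤ) ×ˢ range 5,
      frobSum (K := ZMod p) ZMod.stdAddChar a = nval p m s.1 s.2 := by
  have hcard : Fintype.card (ZMod p) % 4 = 3 := by rwa [ZMod.card]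
  have hK := ringChar_ne_two_of_card_mod_four hcard
  obtain ⟨r, hr, h⟩ := exists_sq_frobSum_eq hK (ZMod.isPrimitive_stdAddChar p) ha
  rw [quadraticChar_neg_one hK, ZMod.χ₄_nat_three_mod_four hcard, ZMod.card,
    GaloisField.finrank p hm.ne'] at h
  have hsq : frobSum (K := ZMod p) ZMod.stdAddChar a ^ 2 = nval p m 1 r ^ 2 := by
    rw [nval_sq hme (one_pow 2), h]
    simp
  rcases sq_eq_sq_iff_eq_or_eq_neg.mp hsq with h | h
  · exact ⟨(1, r), by simp; lia, h⟩
  · exact ⟨(-1, r), by simp; lia, by rw [h, nval_neg]⟩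

lemma sum_nn_mul_nval_pow (hp4 : p % 4 = 3) (hm : 0 < m) (hme : Even m) (k : ℕ) :
    ∑ s ∈ ({1, -1} : Finset ℤ) ×ˢ range 5, nn p m s.1 s.2 * nval p m s.1 s.2 ^ k =
      ((p : ℂ) ^ m) ^ 3 * (frobZeros (GaloisField p m) p 2 k).ncard - ((p : ℂ) ^ m) ^ k := by
  classical
  let _ := Fintype.ofFinite (GaloisField p m)
  let S : (Fin 3 → GaloisField p m) → ℂ := frobSum (K := ZMod p) ZMod.stdAddChar
  have hcard : Nat.card (GaloisField p m) = p ^ m := GaloisField.card p m hm.ne'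
  have hzero : S 0 = (p : ℂ) ^ m := by
    simp [S, frobSum, ← Nat.card_eq_fintype_card, hcard]
  have hψ : (ZMod.stdAddChar : AddChar (ZMod p) ℂ) ≠ 1 := by
    simpa using ZMod.isPrimitive_stdAddChar p one_ne_zero
  have hmoment : ∑ a, S a ^ k =
      ((p : ℂ) ^ m) ^ 3 * (frobZeros (GaloisField p m) p 2 k).ncard := by
    have h := sum_frobSum_pow (F := GaloisField p m) hψ 2 k
    rwa [ZMod.card, hcard, Nat.cast_pow] at h
  have hfiber (s : ℤ × ℕ) :
      nn p m s.1 s.2 = #{a ∈ univ.erase 0 | S a = nval p m s.1 s.2} := by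
    rw [nn_eq_ncard, ← Set.ncard_coe_finset]
    simp [S]
  have hrange : ∀ a ∈ univ.erase 0, S a ∈
      (({1, -1} : Finset ℤ) ×ˢ range 5).image fun s => nval p m s.1 s.2 := fun a ha => by
    obtain ⟨s, hs, h⟩ := exists_frobSum_eq_nval hp4 hm hme (ne_of_mem_erase ha)
    exact mem_image.mpr ⟨s, hs, h.symm⟩
  have hinj : Set.InjOn (fun s : ℤ × ℕ => nval p m s.1 s.2)
      (({1, -1} : Finset ℤ) ×ˢ range 5 : Finset (ℤ × ℕ)) :=
    (nval_injOn (Fact.out : p.Prime).one_lt hme).mono fun s hs => by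
      simpa using (mem_product.mp hs).1
  rw [← hmoment, ← hzero, ← add_sum_erase _ _ (mem_univ 0), add_sub_cancel_left,
    ← sum_fiberwise_of_maps_to hrange, sum_image hinj]
  refine sum_congr rfl fun s _ => ?_
  rw [hfiber, ← nsmul_eq_mul]
  exact (sum_eq_card_nsmul fun a ha => by rw [(mem_filter.mp ha).2]).symm

lemma nn_even_moment (hp4 : p % 4 = 3) (hm : 0 < m) (hme : Even m) (l : ℕ) :
    ∑ j ∈ range 5, ((nn p m 1 j : ℤ) + nn p m (-1) j) * ((-p) ^ (m + j)) ^ l =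
      ((p : ℤ) ^ m) ^ 3 * (frobZeros (GaloisField p m) p 2 (2 * l)).ncard
        - ((p : ℤ) ^ m) ^ (2 * l) := by
  have h := sum_nn_mul_nval_pow hp4 hm hme (2 * l)
  simp only [sum_product, sum_pair (show (1 : ℤ) ≠ -1 by decide), ← sum_add_distrib, pow_mul,
    nval_sq hme (one_pow 2), nval_sq hme neg_one_sq, ← add_mul] at h
  simp only [pow_mul]
  exact_mod_cast h

lemma nn_odd_moment {h : ℕ} (hp4 : p % 4 = 3) (hm : 0 < 2 * h) (l : ℕ) :
    ∑ i ∈ range 3, ((nn p (2 * h) 1 (2 * i) : ℤ) - nn p (2 * h) (-1) (2 * i)) *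
        (p ^ (h + i)) ^ (2 * l + 1) =
      ((p : ℤ) ^ (2 * h)) ^ 3 * (frobZeros (GaloisField p (2 * h)) p 2 (2 * l + 1)).ncard
        - ((p : ℤ) ^ (2 * h)) ^ (2 * l + 1) := by
  have hmoment := congrArg re (sum_nn_mul_nval_pow hp4 hm (even_two_mul h) (2 * l + 1))
  simp only [sum_product, sum_pair (show (1 : ℤ) ≠ -1 by decide), add_re, re_sum,
    ← ofReal_natCast, ← ofReal_pow, ← ofReal_mul, ← ofReal_sub, ofReal_re, re_ofReal_mul,
    re_nval_pow h (one_pow 2), re_nval_pow h neg_one_sq] at hmoment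
  rify
  rw [← hmoment]
  simp only [sum_range_succ, sum_range_zero, Nat.even_iff]
  norm_num
  ring

end Moments

theorem first_three_moment_identities (p : ℕ) [Fact p.Prime] (hp4 : p % 4 = 3)
    (m : ℕ) (hm : 0 < m) (hme : Even m) :
    ((nn p m 1 1 : ℤ) + nn p m (-1) 1) + ((nn p m 1 3 : ℤ) + nn p m (-1) 3) +
        (nn p m 1 0 : ℤ) + nn p m (-1) 0 + nn p m 1 2 + nn p m (-1) 2 +
        nn p m 1 4 + nn p m (-1) 4 = (p : ℤ) ^ (3 * m) - 1 ∧
    (nn p m 1 0 : ℤ) - nn p m (-1) 0 + (p : ℤ) * ((nn p m 1 2 : ℤ) - nn p m (-1) 2) +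
        (p : ℤ) ^ 2 * ((nn p m 1 4 : ℤ) - nn p m (-1) 4) =
        (p : ℤ) ^ (m / 2) * ((p : ℤ) ^ (2 * m) - 1) ∧
    -(p : ℤ) * ((nn p m 1 1 : ℤ) + nn p m (-1) 1) -
        (p : ℤ) ^ 3 * ((nn p m 1 3 : ℤ) + nn p m (-1) 3) +
        (nn p m 1 0 : ℤ) + nn p m (-1) 0 +
        (p : ℤ) ^ 2 * ((nn p m 1 2 : ℤ) + nn p m (-1) 2) +
        (p : ℤ) ^ 4 * ((nn p m 1 4 : ℤ) + nn p m (-1) 4) =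
        (p : ℤ) ^ m * ((p : ℤ) ^ m - 1) ∧
    (nn p m 1 0 : ℤ) - nn p m (-1) 0 + (p : ℤ) ^ 3 * ((nn p m 1 2 : ℤ) - nn p m (-1) 2) +
        (p : ℤ) ^ 6 * ((nn p m 1 4 : ℤ) - nn p m (-1) 4) =
        ((p : ℤ) + 1) * (p : ℤ) ^ (3 * m / 2) * ((p : ℤ) ^ m - 1) := by
  obtain ⟨h, rfl⟩ := hme.two_dvd
  have hp : (p : ℤ) ≠ 0 := Nat.cast_ne_zero.mpr (NeZero.ne p)
  have htwo : (2 : GaloisField p (2 * h)) ≠ 0 :=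
    Ring.two_ne_zero ((ringChar.eq _ p).trans_ne (by lia))
  have hcone := ncard_frobZeros_three (ZMod p) (GaloisField p (2 * h)) (by rwa [ZMod.card]) two_pos
  rw [ZMod.card, GaloisField.card p _ hm.ne', Nat.cast_pow] at hcone
  have h0 := nn_even_moment hp4 hm hme 0
  have h1 := nn_odd_moment hp4 hm 0
  have h2 := nn_even_moment hp4 hm hme 1
  have h3 := nn_odd_moment hp4 hm 1
  rw [mul_zero, frobZeros_zero, Set.ncard_singleton] at h0
  rw [mul_zero, zero_add, frobZeros_one, Set.ncard_singleton] at h1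
  rw [mul_one, frobZeros_two (by lia) two_pos htwo, Set.ncard_singleton] at h2
  rw [mul_one, two_add_one_eq_three, hcone] at h3
  simp only [sum_range_succ, sum_range_zero, zero_add, pow_add, hme.neg_pow] at h0 h1 h2 h3
  refine ⟨?_, mul_left_cancel₀ (pow_ne_zero h hp) ?_, mul_left_cancel₀ (pow_ne_zero (2 * h) hp) ?_,
    mul_left_cancel₀ (pow_ne_zero (3 * h) hp) ?_⟩
  · linear_combination h0
  · rw [Nat.mul_div_cancel_left h two_pos]
    linear_combination h1
  · linear_combination h2
  · rw [show 3 * (2 * h) / 2 = 3 * h by lia]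
    linear_combination h3
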